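/- Fix n ≥ 1 and partitions λ ≥ λ̂ of n in dominance order. Let ρ, ρ̂ be the unit point masses at λ and λ̂ on the set of partitions of n. Then the projections π^n_{n−1}ρ and π^n_{n−1}ρ̂ satisfy: π^n_{n−1}ρ stochastically dominates π^n_{n−1}ρ̂ with respect to the dominance order on partitions of n−1. -/

import Mathlib

open scoped BigOperators

def isPartition (f : ℕ → ℕ) : Prop :=
  (∀ ⦃a b : ℕ⦄, a ≤ b → f b ≤ f a) ∧ ∃ N, ∀ a, N ≤ a → f a = 0

noncomputable def psize (f : ℕ → ℕ) : ℕ := ∑ᶠ a, f a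

def addBox (mu lam : ℕ → ℕ) : Prop := ∃ r, lam = Function.update mu r (mu r + 1)

noncomputable def dimY (lam : ℕ → ℕ) : ℕ :=
  Set.ncard { p : ℕ → ℕ → ℕ |
    p 0 = (fun _ => 0) ∧ (∀ k, isPartition (p k)) ∧
    (∀ k, k < psize lam → addBox (p k) (p (k + 1))) ∧
    (∀ k, psize lam ≤ k → p k = lam) }

def dominates (lam mu : ℕ → ℕ) : Prop :=
  ∀ k, ∑ a ∈ Finset.range k, mu a ≤ ∑ a ∈ Finset.range k, lam a

def moveBox (lam hatlam : ℕ → ℕ) (i hi : ℕ) : Prop :=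
  lam i = hatlam i + 1 ∧ hatlam hi = lam hi + 1 ∧
  ∀ a, a ≠ i → a ≠ hi → lam a = hatlam a

noncomputable def schurOnes (N : ℕ) (lam : ℕ → ℕ) : ℕ :=
  Set.ncard { T : ℕ → ℕ → ℕ |
    (∀ i j, j < lam i → 1 ≤ T i j ∧ T i j ≤ N) ∧
    (∀ i j, j + 1 < lam i → T i j ≤ T i (j + 1)) ∧
    (∀ i j, j < lam (i + 1) → T i j < T (i + 1) j) ∧
    (∀ i j, lam i ≤ j → T i j = 0) }

noncomputable def projStep (rho : (ℕ → ℕ) → ℝ) : (ℕ → ℕ) → ℝ :=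
  fun mu => ∑ᶠ l ∈ { l : ℕ → ℕ | addBox mu l }, ((dimY mu : ℝ) / (dimY l : ℝ)) * rho l

def isMeasureOn (m : ℕ) (rho : (ℕ → ℕ) → ℝ) : Prop :=
  (∀ f, 0 ≤ rho f) ∧ ∀ f, rho f ≠ 0 → isPartition f ∧ psize f = m

def stochDom (m : ℕ) (rho rho' : (ℕ → ℕ) → ℝ) : Prop :=
  ∀ U : Set (ℕ → ℕ),
    (∀ a ∈ U, ∀ b, isPartition b → psize b = m → dominates b a → b ∈ U) →
    ∑ᶠ f ∈ U, rho' f ≤ ∑ᶠ f ∈ U, rho f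

/-!
The projection of the atom at a partition `lam` of `n` gives `lam` minus its corner box in row `r`
the mass `dim (lam - e_r) / dim lam`. By Frobenius's dimension formula this equals
`x_r ∏_{b ≠ r} (1 - 1 / (x_r - x_b)) / n`, where `x_b` are the beta numbers of `lam`. In this form
all rows may be treated alike, because the product vanishes when row `r` has no corner. Frobenius's
formula is equivalent to the total mass being `1`, which is the computation of a trace.

Let `lam` arise from `mu` by moving one box from row `j` up to row `i`. Comparing the products
factor by factor, every row above `i` has at least as much weight for `mu` as for `lam`, and every
row below `j` at least as much for `lam` as for `mu`. Deleting a box of `lam` from row `r` gives a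
partition dominating `mu` minus a box from row `s` if `s ≤ r`, and also if `i ≤ r` and `s ≤ j`.
Given an upper set `U`, either every deletion from `mu` landing in `U` happens below row `j`, or
every deletion from `lam` missing `U` happens above row `i`; in both cases the weights compare row
by row. Finally, the dominance order is generated by such moves, and stochastic dominance is
transitive.
-/

section LagrangeInterpolation

open Polynomial Matrix

variable {K : Type*} [Field K] {N : ℕ} {x : Fin N → K}

theorem sum_eval_mul_eval_lagrangeBasis (hx : Function.Injective x) {f : K[X]}
    (hf : f.natDegree < N) (y : K) :
    ∑ s, f.eval (x s) * (Lagrange.basis Finset.univ x s).eval y = f.eval y := by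
  have hdeg : f.degree < (Finset.univ : Finset (Fin N)).card := by
    rw [Finset.card_fin]
    exact degree_le_natDegree.trans_lt (by exact_mod_cast hf)
  conv_rhs => rw [Lagrange.eq_interpolate hx.injOn hdeg, Lagrange.interpolate_apply, eval_finsetSum]
  simp only [eval_mul, eval_C]

theorem det_vandermonde_update (hx : Function.Injective x) (r : Fin N) (y : K) :
    (vandermonde (Function.update x r y)).det =
      (Lagrange.basis Finset.univ x r).eval y * (vandermonde x).det := by
  have hrow : vandermonde (Function.update x r y) = (vandermonde x).updateRow r
      (∑ s, (Lagrange.basis Finset.univ x s).eval y • vandermonde x s) := by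
    ext a j
    rcases eq_or_ne a r with rfl | ha
    · have hpow := sum_eval_mul_eval_lagrangeBasis hx (f := X ^ (j : ℕ)) (by simp) y
      simpa [vandermonde_apply, Finset.sum_apply, mul_comm] using hpow.symm
    · simp [vandermonde_apply, ha]
  rw [hrow, det_updateRow_sum, smul_eq_mul]

theorem mul_eval_descPochhammer_sub_one (y : K) (j : ℕ) :
    y * (descPochhammer K j).eval (y - 1) = (y - j) * (descPochhammer K j).eval y := by
  calc y * (descPochhammer K j).eval (y - 1) = (descPochhammer K (j + 1)).eval y := by
        rw [descPochhammer_succ_left]; simp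
    _ = (y - j) * (descPochhammer K j).eval y := by
        rw [descPochhammer_succ_right]; simp [mul_comm]

/- The left side is the trace of `f ↦ y f(y - 1)` on polynomials of degree `< N`, evaluated at the
nodes. In the basis of falling factorials this operator is multiplication by `y` minus `diag(j)`. -/
theorem sum_mul_eval_lagrangeBasis_sub_one (hx : Function.Injective x) :
    ∑ r, x r * (Lagrange.basis Finset.univ x r).eval (x r - 1) =
      ∑ r, x r - ∑ r : Fin N, ((r : ℕ) : K) := by
  let shift : Matrix (Fin N) (Fin N) K :=
    of fun r s => x r * (Lagrange.basis Finset.univ x s).eval (x r - 1)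
  let falling : Matrix (Fin N) (Fin N) K := of fun r j => (descPochhammer K j).eval (x r)
  let degrees : Matrix (Fin N) (Fin N) K := diagonal fun j => ((j : ℕ) : K)
  have hunit : IsUnit falling.det := by
    rw [isUnit_iff_ne_zero, ← det_eval_matrixOfPolynomials_eq_det_vandermonde x
      (fun j => descPochhammer K j) (fun _ => descPochhammer_natDegree K _)
      (fun _ => monic_descPochhammer K _)]
    exact det_vandermonde_ne_zero_iff.2 hx
  have hmul : shift * falling = diagonal x * falling - falling * degrees := by
    ext r j
    have hj := sum_eval_mul_eval_lagrangeBasis hx (f := descPochhammer K j)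
      (by rw [descPochhammer_natDegree]; exact j.2) (x r - 1)
    calc (shift * falling) r j = x r * (descPochhammer K j).eval (x r - 1) := by
          rw [← hj, mul_apply, Finset.mul_sum]
          exact Finset.sum_congr rfl fun s _ => by simp only [shift, falling, of_apply]; ring
      _ = (diagonal x * falling - falling * degrees) r j := by
          rw [mul_eval_descPochhammer_sub_one]
          simp only [falling, degrees, Matrix.sub_apply, diagonal_mul, mul_diagonal, of_apply]
          ring
  have hshift : shift = diagonal x - falling * degrees * falling⁻¹ := by
    rw [← mul_nonsing_inv_cancel_right falling shift hunit, hmul, sub_mul,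
      mul_nonsing_inv_cancel_right _ _ hunit]
  calc ∑ r, x r * (Lagrange.basis Finset.univ x r).eval (x r - 1) = shift.trace := rfl
    _ = ∑ r, x r - ∑ r : Fin N, ((r : ℕ) : K) := by
      rw [hshift, trace_sub, trace_mul_cycle, nonsing_inv_mul _ hunit, one_mul, trace_diagonal,
        trace_diagonal]

end LagrangeInterpolation

section RemovalWeight

variable {N : ℕ}

/-- If `x` lists the beta numbers of a partition `lam` of `n` (see `betaNumbers`), this is
`n * dimY (lam - e_r) / dimY lam`, where `e_r` is a box in row `r`. Coincident entries of `x`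
contribute a junk factor `1`. -/
noncomputable def removalWeight (x : Fin N → ℕ) (r : Fin N) : ℝ :=
  x r * ∏ b ∈ Finset.univ.erase r, (1 - ((x r : ℝ) - x b)⁻¹)

theorem one_sub_inv_natCast_sub_natCast_nonneg (m n : ℕ) : 0 ≤ 1 - ((m : ℝ) - n)⁻¹ := by
  rcases le_or_gt m n with h | h
  · have : ((m : ℝ) - n)⁻¹ ≤ 0 := inv_nonpos.2 (sub_nonpos.2 (by exact_mod_cast h))
    linarith
  · have : (m : ℝ) ≥ n + 1 := by exact_mod_cast h
    exact sub_nonneg.2 (inv_le_one_of_one_le₀ (by linarith))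

theorem removalWeight_nonneg (x : Fin N → ℕ) (r : Fin N) : 0 ≤ removalWeight x r :=
  mul_nonneg (Nat.cast_nonneg _)
    (Finset.prod_nonneg fun _ _ => one_sub_inv_natCast_sub_natCast_nonneg _ _)

theorem removalWeight_eq_zero_of_succ {x : Fin N → ℕ} {r b : Fin N} (h : x r = x b + 1) :
    removalWeight x r = 0 := by
  have hbr : b ≠ r := by rintro rfl; omega
  have hmem : b ∈ Finset.univ.erase r := Finset.mem_erase.2 ⟨hbr, Finset.mem_univ b⟩
  rw [removalWeight, Finset.prod_eq_zero hmem (by simp [h]), mul_zero]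

theorem removalWeight_eq_mul_eval_lagrangeBasis {x : Fin N → ℕ} (hx : Function.Injective x)
    (r : Fin N) :
    removalWeight x r =
      x r * (Lagrange.basis Finset.univ (fun a => (x a : ℝ)) r).eval ((x r : ℝ) - 1) := by
  rw [removalWeight, Lagrange.basis, Polynomial.eval_prod]
  congr 1
  refine Finset.prod_congr rfl fun b hb => ?_
  have hne : (x r : ℝ) - x b ≠ 0 :=
    sub_ne_zero.2 (Nat.cast_injective.ne (hx.ne (Finset.ne_of_mem_erase hb).symm))
  simp only [Lagrange.basisDivisor, Polynomial.eval_mul, Polynomial.eval_C, Polynomial.eval_sub,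
    Polynomial.eval_X]
  field_simp
  ring

theorem sum_removalWeight {x : Fin N → ℕ} (hx : Function.Injective x) :
    ∑ r, removalWeight x r = ∑ r, (x r : ℝ) - ∑ r : Fin N, ((r : ℕ) : ℝ) := by
  simp only [removalWeight_eq_mul_eval_lagrangeBasis hx]
  exact sum_mul_eval_lagrangeBasis_sub_one (x := fun a => (x a : ℝ)) (Nat.cast_injective.comp hx)

theorem removalWeight_eq_mul_mul (x : Fin N → ℕ) {r i j : Fin N} (hir : i ≠ r) (hjr : j ≠ r)
    (hij : i ≠ j) :
    removalWeight x r =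
      (x r * ∏ b ∈ ((Finset.univ.erase r).erase i).erase j, (1 - ((x r : ℝ) - x b)⁻¹)) *
        ((1 - ((x r : ℝ) - x i)⁻¹) * (1 - ((x r : ℝ) - x j)⁻¹)) := by
  rw [removalWeight, ← Finset.mul_prod_erase _ _ (show i ∈ Finset.univ.erase r by simp [hir]),
    ← Finset.mul_prod_erase _ _
      (show j ∈ (Finset.univ.erase r).erase i by simp [hjr, hij.symm])]
  ring

variable {x y : Fin N → ℕ} {i j r : Fin N}

/- Moving a unit from entry `j` to entry `i` only affects the factors `i` and `j` of the weight, so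
the comparison reduces to `(1 - 1/u)(1 - 1/v)` against `(1 - 1/(u-1))(1 - 1/(v+1))`. -/
theorem exists_removalWeight_sub_eq (hx : Function.Injective x) (hy : Function.Injective y)
    (hij : i ≠ j) (hmove : y + Pi.single j 1 = x + Pi.single i 1) (hir : i ≠ r) (hjr : j ≠ r)
    {u v : ℝ} (hu : u = x r - x i) (hv : v = x r - x j) :
    ∃ C : ℝ, 0 ≤ C ∧ removalWeight x r - removalWeight y r =
      C * ((v - u + 1) * (u + v - 1) / (u * v * ((u - 1) * (v + 1)))) := by
  have hyi : (y i : ℝ) = x i + 1 := by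
    exact_mod_cast (by simpa [hij] using congrFun hmove i : y i = x i + 1)
  have hyj : (x j : ℝ) = y j + 1 := by
    exact_mod_cast (by simpa [hij.symm, eq_comm] using congrFun hmove j : x j = y j + 1)
  have hyb {b : Fin N} (hbi : b ≠ i) (hbj : b ≠ j) : y b = x b := by
    simpa [hbi, hbj] using congrFun hmove b
  have hyr : y r = x r := hyb hir.symm hjr.symm
  refine ⟨x r * ∏ b ∈ ((Finset.univ.erase r).erase i).erase j, (1 - ((x r : ℝ) - x b)⁻¹),
    mul_nonneg (Nat.cast_nonneg _)
      (Finset.prod_nonneg fun _ _ => one_sub_inv_natCast_sub_natCast_nonneg _ _), ?_⟩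
  have hprod : ∏ b ∈ ((Finset.univ.erase r).erase i).erase j, (1 - ((x r : ℝ) - y b)⁻¹) =
      ∏ b ∈ ((Finset.univ.erase r).erase i).erase j, (1 - ((x r : ℝ) - x b)⁻¹) := by
    refine Finset.prod_congr rfl fun b hb => ?_
    simp only [Finset.mem_erase] at hb
    rw [hyb hb.2.1 hb.1]
  have hu0 : u ≠ 0 := hu ▸ sub_ne_zero.2 (Nat.cast_injective.ne (hx.ne hir.symm))
  have hv0 : v ≠ 0 := hv ▸ sub_ne_zero.2 (Nat.cast_injective.ne (hx.ne hjr.symm))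
  have hyu : (x r : ℝ) - y i = u - 1 := by rw [hu, hyi]; ring
  have hyv : (x r : ℝ) - y j = v + 1 := by rw [hv, hyj]; ring
  have hu1 : u - 1 ≠ 0 := hyu ▸ hyr ▸ sub_ne_zero.2 (Nat.cast_injective.ne (hy.ne hir.symm))
  have hv1 : v + 1 ≠ 0 := hyv ▸ hyr ▸ sub_ne_zero.2 (Nat.cast_injective.ne (hy.ne hjr.symm))
  rw [removalWeight_eq_mul_mul x hir hjr hij, removalWeight_eq_mul_mul y hir hjr hij, hyr, hprod,
    ← hu, ← hv, hyu, hyv, ← mul_sub]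
  congr 1
  field_simp
  ring

theorem removalWeight_le_of_lt (hx : StrictAnti x) (hy : StrictAnti y) (hij : i < j)
    (hmove : y + Pi.single j 1 = x + Pi.single i 1) (hri : r < i) :
    removalWeight y r ≤ removalWeight x r := by
  obtain ⟨C, hC, hsub⟩ := exists_removalWeight_sub_eq hx.injective hy.injective hij.ne hmove
    hri.ne' (hri.trans hij).ne' rfl rfl
  have hyi : y i = x i + 1 := by simpa [hij.ne] using congrFun hmove i
  have hyr : y r = x r := by simpa [hri.ne, (hri.trans hij).ne] using congrFun hmove r
  have hxi : (x i : ℝ) + 2 ≤ x r := by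
    exact_mod_cast (by have := hy hri; omega : x i + 2 ≤ x r)
  have hxj : (x j : ℝ) + 1 ≤ x i := by exact_mod_cast hx hij
  rw [← sub_nonneg, hsub]
  refine mul_nonneg hC (div_nonneg (mul_nonneg ?_ ?_) (mul_nonneg (mul_nonneg ?_ ?_)
    (mul_nonneg ?_ ?_))) <;> linarith

theorem removalWeight_le_of_gt (hx : StrictAnti x) (hy : StrictAnti y) (hij : i < j)
    (hmove : y + Pi.single j 1 = x + Pi.single i 1) (hjr : j < r) :
    removalWeight x r ≤ removalWeight y r := by
  obtain ⟨C, hC, hsub⟩ := exists_removalWeight_sub_eq hx.injective hy.injective hij.ne hmove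
    (hij.trans hjr).ne hjr.ne rfl rfl
  have hyj : x j = y j + 1 := by simpa [hij.ne', eq_comm] using congrFun hmove j
  have hyr : y r = x r := by simpa [hjr.ne', (hij.trans hjr).ne'] using congrFun hmove r
  have hxr : (x r : ℝ) + 2 ≤ x j := by
    exact_mod_cast (by have := hy hjr; omega : x r + 2 ≤ x j)
  have hxj : (x j : ℝ) + 1 ≤ x i := by exact_mod_cast hx hij
  rw [← sub_nonpos, hsub]
  refine mul_nonpos_of_nonneg_of_nonpos hC (div_nonpos_of_nonpos_of_nonneg
    (mul_nonpos_of_nonneg_of_nonpos ?_ ?_)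
    (mul_nonneg (mul_nonneg_of_nonpos_of_nonpos ?_ ?_)
      (mul_nonneg_of_nonpos_of_nonpos ?_ ?_))) <;> linarith

end RemovalWeight

theorem sum_le_sum_of_crossing {ι M : Type*} [LinearOrder ι] [Fintype ι] [AddCommGroup M]
    [PartialOrder M] [IsOrderedAddMonoid M] {p q : ι → M} {A B : Finset ι} {i j : ι}
    (hp : ∀ r, 0 ≤ p r) (hq : ∀ r, 0 ≤ q r) (hsum : ∑ r, q r = ∑ r, p r)
    (hlow : ∀ r < i, p r ≤ q r) (hhigh : ∀ r, j < r → q r ≤ p r)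
    (hAB : ∀ s ∈ A, ∀ r, p r ≠ 0 → (s ≤ r ∨ i ≤ r ∧ s ≤ j) → r ∈ B) :
    ∑ r ∈ A, q r ≤ ∑ r ∈ B, p r := by
  classical
  by_cases hA : ∃ s ∈ A, s ≤ j
  · obtain ⟨s, hsA, hsj⟩ := hA
    have hcompl : ∑ r ∈ Bᶜ, p r ≤ ∑ r ∈ Aᶜ, q r := by
      calc ∑ r ∈ Bᶜ, p r = ∑ r ∈ Bᶜ with p r ≠ 0, p r := (Finset.sum_filter_ne_zero _).symm
        _ ≤ ∑ r ∈ Bᶜ with p r ≠ 0, q r := by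
          refine Finset.sum_le_sum fun r hr => hlow r ?_
          rw [Finset.mem_filter, Finset.mem_compl] at hr
          exact lt_of_not_ge fun hir => hr.1 (hAB s hsA r hr.2 (Or.inr ⟨hir, hsj⟩))
        _ ≤ ∑ r ∈ Aᶜ, q r := by
          refine Finset.sum_le_sum_of_subset_of_nonneg (fun r hr => ?_) fun r _ _ => hq r
          rw [Finset.mem_filter, Finset.mem_compl] at hr
          exact Finset.mem_compl.2 fun hrA => hr.1 (hAB r hrA r hr.2 (Or.inl le_rfl))
    refine le_of_add_le_add_right (a := ∑ r ∈ Bᶜ, p r) ?_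
    calc ∑ r ∈ A, q r + ∑ r ∈ Bᶜ, p r ≤ ∑ r ∈ A, q r + ∑ r ∈ Aᶜ, q r := by gcongr
      _ = ∑ r ∈ B, p r + ∑ r ∈ Bᶜ, p r := by
        rw [Finset.sum_add_sum_compl, hsum, Finset.sum_add_sum_compl]
  · push Not at hA
    calc ∑ r ∈ A, q r ≤ ∑ r ∈ A, p r := Finset.sum_le_sum fun r hr => hhigh r (hA r hr)
      _ = ∑ r ∈ A with p r ≠ 0, p r := (Finset.sum_filter_ne_zero _).symm
      _ ≤ ∑ r ∈ B, p r := by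
        refine Finset.sum_le_sum_of_subset_of_nonneg (fun r hr => ?_) fun r _ _ => hp r
        rw [Finset.mem_filter] at hr
        exact hAB r hr.1 r hr.2 (Or.inl le_rfl)

section Support

/-- The support of `f` lies in the first `N` rows. -/
def AtMostRows (N : ℕ) (f : ℕ → ℕ) : Prop := ∀ a, N ≤ a → f a = 0

variable {N : ℕ} {f : ℕ → ℕ}

theorem AtMostRows.lt (hf : AtMostRows N f) {r : ℕ} (hr : 0 < f r) : r < N :=
  lt_of_not_ge fun h => hr.ne' (hf r h)

theorem AtMostRows.hasFiniteSupport (hf : AtMostRows N f) : f.HasFiniteSupport :=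
  (Set.finite_lt_nat N).subset fun _ ha => hf.lt (Nat.pos_of_ne_zero ha)

theorem AtMostRows.psize_eq_sum (hf : AtMostRows N f) : psize f = ∑ a ∈ Finset.range N, f a :=
  finsum_eq_sum_of_support_subset _ fun _ ha =>
    Finset.mem_coe.2 (Finset.mem_range.2 (hf.lt (Nat.pos_of_ne_zero ha)))

theorem isPartition.hasFiniteSupport (hf : isPartition f) : f.HasFiniteSupport :=
  let ⟨_, (hN : AtMostRows _ f)⟩ := hf.2
  hN.hasFiniteSupport

end Support

section Boxes

theorem sum_range_add_single (f : ℕ → ℕ) (r k : ℕ) :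
    ∑ a ∈ Finset.range k, (f + Pi.single r 1 : ℕ → ℕ) a =
      ∑ a ∈ Finset.range k, f a + if r < k then 1 else 0 := by
  simp only [Pi.add_apply, Finset.sum_add_distrib, Pi.single_apply, Finset.sum_ite_eq',
    Finset.mem_range]

theorem finsum_mul_add_single (w : ℕ → ℕ) {f : ℕ → ℕ} (hf : f.HasFiniteSupport) (r : ℕ) :
    ∑ᶠ a, w a * (f + Pi.single r 1 : ℕ → ℕ) a = ∑ᶠ a, w a * f a + w r := by
  have hsingle (a : ℕ) (ha : a ≠ r) : w a * (Pi.single r 1 : ℕ → ℕ) a = 0 := by simp [ha]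
  simp only [Pi.add_apply, mul_add]
  rw [finsum_add_distrib, finsum_eq_single _ r hsingle, Pi.single_eq_same, mul_one]
  · exact hf.subset fun a ha => right_ne_zero_of_mul ha
  · exact (Set.finite_singleton r).subset fun a ha => by_contra fun h => ha (hsingle a h)

theorem psize_add_single {f : ℕ → ℕ} (hf : f.HasFiniteSupport) (r : ℕ) :
    psize (f + Pi.single r 1) = psize f + 1 := by
  simpa only [psize, one_mul] using finsum_mul_add_single (fun _ => 1) hf r

theorem addBox_iff_exists_add_single {mu lam : ℕ → ℕ} :
    addBox mu lam ↔ ∃ r, lam = mu + Pi.single r 1 := by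
  have hupdate (r : ℕ) : Function.update mu r (mu r + 1) = mu + Pi.single r 1 := by
    ext a
    rcases eq_or_ne a r with rfl | h <;> simp [*]
  simp only [addBox, hupdate]

/-- The sequence `f` with one box deleted from row `r`; an empty row stays empty. -/
def removeBox (f : ℕ → ℕ) (r : ℕ) : ℕ → ℕ := f - Pi.single r 1

theorem removeBox_add_single {f : ℕ → ℕ} {r : ℕ} (hr : 0 < f r) :
    removeBox f r + Pi.single r 1 = f := by
  ext a
  rcases eq_or_ne a r with rfl | h
  · simpa [removeBox] using Nat.sub_add_cancel hr
  · simp [removeBox, h]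

theorem removeBox_add_single_self (f : ℕ → ℕ) (r : ℕ) : removeBox (f + Pi.single r 1) r = f :=
  add_tsub_cancel_right f _

theorem removeBox_injOn (f : ℕ → ℕ) : Set.InjOn (removeBox f) {r | 0 < f r} := by
  intro r hr s _ h
  by_contra hrs
  have := congrFun h r
  simp only [removeBox, Pi.sub_apply, Pi.single_eq_same, Pi.single_eq_of_ne hrs] at this
  have : 0 < f r := hr
  omega

theorem psize_removeBox {f : ℕ → ℕ} (hf : f.HasFiniteSupport) {r : ℕ} (hr : 0 < f r) :
    psize (removeBox f r) + 1 = psize f := by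
  rw [← psize_add_single (hf.subset fun a ha hfa => ha (by simp [removeBox, hfa])) r,
    removeBox_add_single hr]

theorem isPartition.removeBox {f : ℕ → ℕ} (hf : isPartition f) {r : ℕ} (hr : f (r + 1) < f r) :
    isPartition (removeBox f r) := by
  obtain ⟨hanti, N, hN⟩ := hf
  refine ⟨antitone_nat_of_succ_le fun a => ?_, N, fun a ha => by simp [_root_.removeBox, hN a ha]⟩
  have ha : f (a + 1) ≤ f a := hanti a.le_succ
  rcases eq_or_ne a r with rfl | har
  · simpa [_root_.removeBox] using Nat.le_sub_one_of_lt hr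
  · simpa [_root_.removeBox, har] using (Nat.sub_le _ _).trans ha

theorem isPartition.add_single {f : ℕ → ℕ} (hf : isPartition f) {r : ℕ}
    (hr : ∀ a, a + 1 = r → f r < f a) : isPartition (f + Pi.single r 1) := by
  obtain ⟨hanti, N, hN⟩ := hf
  refine ⟨antitone_nat_of_succ_le fun a => ?_, max N (r + 1), fun a ha => ?_⟩
  · have ha : f (a + 1) ≤ f a := hanti a.le_succ
    simp only [Pi.add_apply, Pi.single_apply]
    rcases eq_or_ne (a + 1) r with har | har
    · have := hr a har
      split_ifs <;> subst_vars <;> omega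
    · rw [if_neg har]
      omega
  · simp [hN a (by omega), show a ≠ r by omega]

theorem dominates_removeBox_of_add_single_eq {lam mu : ℕ → ℕ} {i j r s : ℕ} (hij : i < j)
    (hmove : lam + Pi.single j 1 = mu + Pi.single i 1) (hr : 0 < lam r) (hs : 0 < mu s)
    (hrs : s ≤ r ∨ i ≤ r ∧ s ≤ j) : dominates (removeBox lam r) (removeBox mu s) := by
  intro k
  replace hmove := congrArg (fun f : ℕ → ℕ => ∑ a ∈ Finset.range k, f a) hmove
  have hlam := congrArg (fun f : ℕ → ℕ => ∑ a ∈ Finset.range k, f a) (removeBox_add_single hr)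
  have hmu := congrArg (fun f : ℕ → ℕ => ∑ a ∈ Finset.range k, f a) (removeBox_add_single hs)
  simp only [sum_range_add_single] at hmove hlam hmu
  split_ifs at hmove hlam hmu <;> omega

end Boxes

section Corners

variable {N : ℕ} {f lam mu : ℕ → ℕ}

theorem AtMostRows.removeBox (hf : AtMostRows N f) (r : ℕ) : AtMostRows N (removeBox f r) :=
  fun a ha => by simp [_root_.removeBox, hf a ha]

/-- The rows, among the first `N`, from which a box of the partition `f` can be removed. -/
def corners (N : ℕ) (f : ℕ → ℕ) : Finset (Fin N) := {r | f (r + 1) < f r}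

theorem mem_corners {r : Fin N} : r ∈ corners N f ↔ f (r + 1) < f r := by
  simp [corners]

theorem pos_of_mem_corners {r : Fin N} (hr : r ∈ corners N f) : 0 < f r :=
  pos_of_gt (mem_corners.1 hr)

theorem isPartition_and_addBox_iff (hlam : isPartition lam) (hN : AtMostRows N lam) :
    isPartition mu ∧ addBox mu lam ↔ ∃ r ∈ corners N lam, removeBox lam r = mu := by
  constructor
  · rintro ⟨hmu, hadd⟩
    obtain ⟨r, rfl⟩ := addBox_iff_exists_add_single.1 hadd
    refine ⟨⟨r, hN.lt (by simp)⟩, mem_corners.2 ?_, removeBox_add_single_self mu r⟩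
    have := hmu.1 r.le_succ
    simpa using Nat.lt_succ_of_le this
  · rintro ⟨r, hr, rfl⟩
    exact ⟨hlam.removeBox (mem_corners.1 hr),
      addBox_iff_exists_add_single.2 ⟨r, (removeBox_add_single (pos_of_mem_corners hr)).symm⟩⟩

theorem removeBox_injOn_corners (N : ℕ) (f : ℕ → ℕ) :
    Set.InjOn (fun r : Fin N => removeBox f r) (corners N f) := fun _ hr _ hs h =>
  Fin.ext (removeBox_injOn f (pos_of_mem_corners hr) (pos_of_mem_corners hs) h)

end Corners

section Dimension

variable {N : ℕ} {lam : ℕ → ℕ}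

/-- The sequences of partitions counted by `dimY lam`: standard Young tableaux of shape `lam`, seen
as paths from the empty partition to `lam` in Young's graph, constant from time `psize lam` on. -/
def growthPaths (lam : ℕ → ℕ) : Set (ℕ → ℕ → ℕ) :=
  { p | p 0 = (fun _ => 0) ∧ (∀ k, isPartition (p k)) ∧
    (∀ k, k < psize lam → addBox (p k) (p (k + 1))) ∧
    (∀ k, psize lam ≤ k → p k = lam) }

theorem dimY_eq_natCard (lam : ℕ → ℕ) : dimY lam = Nat.card (growthPaths lam) := rfl

/-- The path following `q` before time `psize lam` and equal to `lam` afterwards. -/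
noncomputable def extendPath (lam : ℕ → ℕ) (q : ℕ → ℕ → ℕ) : ℕ → ℕ → ℕ :=
  fun k => if k < psize lam then q k else lam

theorem extendPath_mem_growthPaths (hlam : isPartition lam) {mu : ℕ → ℕ} (hadd : addBox mu lam)
    (hsize : psize mu + 1 = psize lam) {q : ℕ → ℕ → ℕ} (hq : q ∈ growthPaths mu) :
    extendPath lam q ∈ growthPaths lam := by
  obtain ⟨hzero, hpart, hstep, hend⟩ := hq
  refine ⟨?_, fun k => ?_, fun k hk => ?_, fun k hk => if_neg hk.not_gt⟩
  · rw [extendPath, if_pos (by omega), hzero]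
  · unfold extendPath
    split_ifs
    exacts [hpart k, hlam]
  · rcases (Nat.succ_le_of_lt hk).lt_or_eq with hk' | hk'
    · simpa only [extendPath, if_pos hk, if_pos hk'] using hstep k (by omega)
    · simpa only [extendPath, if_pos hk, if_neg hk'.not_lt, hend k (by omega)] using hadd

theorem exists_extendPath_eq {p : ℕ → ℕ → ℕ} (hp : p ∈ growthPaths lam)
    (hsize : psize (p (psize lam - 1)) + 1 = psize lam) :
    ∃ q ∈ growthPaths (p (psize lam - 1)), extendPath lam q = p := by
  obtain ⟨hzero, hpart, hstep, hend⟩ := hp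
  refine ⟨fun k => p (min k (psize lam - 1)),
    ⟨by simpa using hzero, fun k => hpart _, fun k hk => ?_, fun k hk => ?_⟩, ?_⟩
  · simpa only [min_eq_left (show k ≤ psize lam - 1 by omega),
      min_eq_left (show k + 1 ≤ psize lam - 1 by omega)] using hstep k (by omega)
  · simp only [min_eq_right (show psize lam - 1 ≤ k by omega)]
  · funext k
    unfold extendPath
    split_ifs with hk
    · exact congrArg p (min_eq_left (Nat.le_sub_one_of_lt hk))
    · exact (hend k (not_lt.1 hk)).symm

theorem extendPath_bijective (hlam : isPartition lam) (hN : AtMostRows N lam)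
    (hpos : 0 < psize lam) :
    Function.Bijective fun q : Σ r : corners N lam, growthPaths (removeBox lam (r : Fin N)) =>
      (⟨extendPath lam q.2, extendPath_mem_growthPaths hlam
        ((isPartition_and_addBox_iff hlam hN).2 ⟨q.1, q.1.2, rfl⟩).2
        (psize_removeBox hN.hasFiniteSupport (pos_of_mem_corners q.1.2)) q.2.2⟩ :
        growthPaths lam) := by
  have hsize (r : corners N lam) : psize (removeBox lam (r : Fin N)) + 1 = psize lam :=
    psize_removeBox hN.hasFiniteSupport (pos_of_mem_corners r.2)
  constructor
  · rintro ⟨r, q, hq⟩ ⟨s, q', hq'⟩ h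
    have hbefore (k : ℕ) (hk : k < psize lam) : q k = q' k := by
      simpa only [extendPath, if_pos hk] using congrFun (Subtype.ext_iff.1 h) k
    have hlast := hbefore (psize lam - 1) (by omega)
    rw [hq.2.2.2 _ (by have := hsize r; omega), hq'.2.2.2 _ (by have := hsize s; omega)] at hlast
    obtain rfl : r = s := Subtype.ext (removeBox_injOn_corners N lam r.2 s.2 hlast)
    obtain rfl : q = q' := by
      funext k
      rcases lt_or_ge k (psize lam) with hk | hk
      · exact hbefore k hk
      · have := hsize r
        rw [hq.2.2.2 k (by omega), hq'.2.2.2 k (by omega)]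
    rfl
  · rintro ⟨p, hp⟩
    have hadd : addBox (p (psize lam - 1)) lam := by
      have := hp.2.2.1 (psize lam - 1) (by omega)
      rwa [Nat.sub_add_cancel hpos, hp.2.2.2 _ le_rfl] at this
    obtain ⟨r, hr, hrp⟩ := (isPartition_and_addBox_iff hlam hN).1 ⟨hp.2.1 _, hadd⟩
    obtain ⟨q, hq, rfl⟩ := exists_extendPath_eq hp (hrp ▸ hsize ⟨r, hr⟩)
    exact ⟨⟨⟨r, hr⟩, q, hrp ▸ hq⟩, rfl⟩

theorem growthPaths_subsingleton_of_psize_eq_zero (hzero : psize lam = 0) :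
    (growthPaths lam).Subsingleton := fun p hp q hq => by
  funext k
  rw [hp.2.2.2 k (by omega), hq.2.2.2 k (by omega)]

theorem growthPaths_finite (hlam : isPartition lam) : (growthPaths lam).Finite := by
  obtain ⟨N, hN : AtMostRows N lam⟩ := hlam.2
  induction hn : psize lam generalizing lam with
  | zero => exact (growthPaths_subsingleton_of_psize_eq_zero hn).finite
  | succ n ih =>
    have (r : corners N lam) : Finite (growthPaths (removeBox lam (r : Fin N))) := by
      have hsize := psize_removeBox hN.hasFiniteSupport (pos_of_mem_corners r.2)
      exact ih (hlam.removeBox (mem_corners.1 r.2)) (hN.removeBox _) (by omega)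
    exact Finite.of_surjective _ (extendPath_bijective hlam hN (by omega)).surjective

theorem dimY_eq_sum_corners (hlam : isPartition lam) (hN : AtMostRows N lam)
    (hpos : 0 < psize lam) : dimY lam = ∑ r ∈ corners N lam, dimY (removeBox lam r) := by
  have (r : corners N lam) : Finite (growthPaths (removeBox lam (r : Fin N))) :=
    growthPaths_finite (hlam.removeBox (mem_corners.1 r.2))
  rw [dimY_eq_natCard, ← Nat.card_eq_of_bijective _ (extendPath_bijective hlam hN hpos),
    Nat.card_sigma]
  exact Finset.sum_coe_sort (corners N lam) fun r => dimY (removeBox lam r)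

theorem dimY_eq_zero_of_not_isPartition (hlam : ¬ isPartition lam) : dimY lam = 0 := by
  have hempty : growthPaths lam = ∅ := Set.eq_empty_of_forall_notMem fun p hp =>
    hlam (hp.2.2.2 _ le_rfl ▸ hp.2.1 (psize lam))
  exact (congrArg Set.ncard hempty).trans (Set.ncard_empty _)

theorem dimY_zero : dimY (fun _ => 0) = 1 := by
  have hzero : psize (fun _ => 0) = 0 := finsum_zero
  have hmem : (fun _ _ => 0) ∈ growthPaths fun _ => 0 :=
    ⟨rfl, fun _ => ⟨fun _ _ _ => le_rfl, 0, fun _ _ => rfl⟩, fun k hk => by omega, fun _ _ => rfl⟩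
  rw [dimY_eq_natCard, Nat.card_coe_set_eq, Set.ncard_eq_one]
  exact ⟨_, (growthPaths_subsingleton_of_psize_eq_zero hzero).eq_singleton_of_mem hmem⟩

end Dimension

section FrobeniusFormula

variable {N : ℕ} {f lam : ℕ → ℕ}

/-- The beta numbers `f a + (N - 1 - a)` of `f` with respect to `N` rows; for a partition of length
`N` they are its first-column hook lengths. -/
def betaNumbers (N : ℕ) (f : ℕ → ℕ) : Fin N → ℕ := fun a => f a + a.rev

theorem betaNumbers_add_single (f : ℕ → ℕ) (r : Fin N) :
    betaNumbers N (f + Pi.single (r : ℕ) 1) = betaNumbers N f + Pi.single r 1 := by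
  ext a
  simp only [betaNumbers, Pi.add_apply, Pi.single_apply, Fin.ext_iff]
  ring

theorem isPartition.strictAnti_betaNumbers (hf : isPartition f) (N : ℕ) :
    StrictAnti (betaNumbers N f) := fun _ _ hab =>
  add_lt_add_of_le_of_lt (hf.1 hab.le) (Fin.rev_strictAnti hab)

theorem sum_betaNumbers (hf : AtMostRows N f) :
    ∑ a, betaNumbers N f a = psize f + ∑ a : Fin N, (a : ℕ) := by
  rw [hf.psize_eq_sum, Finset.sum_range, ← Equiv.sum_comp Fin.revPerm fun a : Fin N => (a : ℕ),
    ← Finset.sum_add_distrib]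
  rfl

theorem removalWeight_betaNumbers_eq_zero (hf : isPartition f) (hN : AtMostRows N f) {r : Fin N}
    (hr : r ∉ corners N f) : removalWeight (betaNumbers N f) r = 0 := by
  have heq : f (r + 1) = f r := (hf.1 (Nat.le_succ r)).antisymm (not_lt.1 (mt mem_corners.2 hr))
  rcases (Nat.succ_le_of_lt r.2).lt_or_eq with hrN | hrN
  · refine removalWeight_eq_zero_of_succ (b := ⟨r + 1, hrN⟩) ?_
    simp only [betaNumbers, heq, Fin.val_rev]
    omega
  · have hzero : betaNumbers N f r = 0 := by
      have hfr : f r = 0 := heq ▸ hN (r + 1) (by omega)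
      simp only [betaNumbers, hfr, Fin.val_rev]
      omega
    rw [removalWeight, hzero, Nat.cast_zero, zero_mul]

theorem sum_removalWeight_betaNumbers (hf : isPartition f) (hN : AtMostRows N f) :
    ∑ r, removalWeight (betaNumbers N f) r = psize f := by
  rw [sum_removalWeight (hf.strictAnti_betaNumbers N).injective]
  have := sum_betaNumbers hN
  rw [sub_eq_iff_eq_add]
  exact_mod_cast this

/-- Frobenius's expression `∏_{a<b} (x b - x a) / ∏_a (x a)!` in the beta numbers `x` of `f`. It is
proportional to `dimY f / (psize f)!`; see `dimY_mul_frobeniusQuotient_zero`. -/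
noncomputable def frobeniusQuotient (N : ℕ) (f : ℕ → ℕ) : ℝ :=
  (Matrix.vandermonde fun a => (betaNumbers N f a : ℝ)).det /
    ∏ a, ((betaNumbers N f a).factorial : ℝ)

theorem frobeniusQuotient_ne_zero (hf : isPartition f) (N : ℕ) : frobeniusQuotient N f ≠ 0 :=
  div_ne_zero
    (Matrix.det_vandermonde_ne_zero_iff.2
      (Nat.cast_injective.comp (hf.strictAnti_betaNumbers N).injective))
    (Finset.prod_ne_zero_iff.2 fun _ _ => Nat.cast_ne_zero.2 (Nat.factorial_ne_zero _))

theorem prod_factorial_add_single {ι : Type*} [Fintype ι] [DecidableEq ι] (x : ι → ℕ) (r : ι) :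
    ∏ a, ((x + Pi.single r 1 : ι → ℕ) a).factorial = (x r + 1) * ∏ a, (x a).factorial := by
  rw [← Finset.mul_prod_erase _ _ (Finset.mem_univ r),
    ← Finset.mul_prod_erase _ (fun a => (x a).factorial) (Finset.mem_univ r), ← mul_assoc]
  congr 1
  · simp [Nat.factorial_succ]
  · exact Finset.prod_congr rfl fun a ha => by simp [Finset.ne_of_mem_erase ha]

theorem frobeniusQuotient_removeBox (hf : isPartition f) {r : Fin N} (hr : 0 < f r) :
    frobeniusQuotient N (removeBox f r) =
      removalWeight (betaNumbers N f) r * frobeniusQuotient N f := by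
  have hinj := (hf.strictAnti_betaNumbers N).injective
  have hadd : betaNumbers N f = betaNumbers N (removeBox f r) + Pi.single r 1 := by
    rw [← betaNumbers_add_single, removeBox_add_single hr]
  have hcast : (fun a => (betaNumbers N (removeBox f r) a : ℝ)) =
      Function.update (fun a => (betaNumbers N f a : ℝ)) r ((betaNumbers N f r : ℝ) - 1) := by
    ext a
    rcases eq_or_ne a r with rfl | ha
    · simp [hadd]
    · simp [hadd, ha]
  have hfact : ∏ a, ((betaNumbers N f a).factorial : ℝ) =
      betaNumbers N f r * ∏ a, ((betaNumbers N (removeBox f r) a).factorial : ℝ) := by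
    rw [hadd]
    exact_mod_cast by simpa using prod_factorial_add_single (betaNumbers N (removeBox f r)) r
  have hpos : (betaNumbers N f r : ℝ) ≠ 0 := Nat.cast_ne_zero.2 (Nat.add_pos_left hr _).ne'
  have hprod : ∏ a, ((betaNumbers N (removeBox f r) a).factorial : ℝ) ≠ 0 :=
    Finset.prod_ne_zero_iff.2 fun _ _ => Nat.cast_ne_zero.2 (Nat.factorial_ne_zero _)
  rw [frobeniusQuotient, frobeniusQuotient, hcast, hfact,
    det_vandermonde_update (x := fun a => (betaNumbers N f a : ℝ)) (Nat.cast_injective.comp hinj) r,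
    removalWeight_eq_mul_eval_lagrangeBasis hinj]
  field_simp

theorem dimY_mul_frobeniusQuotient_zero (hlam : isPartition lam) (hN : AtMostRows N lam) :
    (dimY lam : ℝ) * frobeniusQuotient N (fun _ => 0) =
      (psize lam).factorial * frobeniusQuotient N lam := by
  induction hn : psize lam generalizing lam with
  | zero =>
    obtain rfl : lam = fun _ => 0 := by
      funext a
      by_contra ha
      have := psize_removeBox hN.hasFiniteSupport (Nat.pos_of_ne_zero ha)
      omega
    simp [dimY_zero]
  | succ n ih =>
    have hstep (r : Fin N) (hr : r ∈ corners N lam) :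
        (dimY (removeBox lam r) : ℝ) * frobeniusQuotient N (fun _ => 0) =
          n.factorial * frobeniusQuotient N lam * removalWeight (betaNumbers N lam) r := by
      have hpos := pos_of_mem_corners hr
      have hsize := psize_removeBox hN.hasFiniteSupport hpos
      rw [ih (hlam.removeBox (mem_corners.1 hr)) (hN.removeBox r) (by omega),
        frobeniusQuotient_removeBox hlam hpos]
      ring
    have hsum : ∑ r ∈ corners N lam, removalWeight (betaNumbers N lam) r = n + 1 := by
      rw [Finset.sum_subset (Finset.subset_univ _) fun r _ hr =>
        removalWeight_betaNumbers_eq_zero hlam hN hr, sum_removalWeight_betaNumbers hlam hN, hn]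
      exact Nat.cast_succ n
    rw [dimY_eq_sum_corners hlam hN (by omega), Nat.cast_sum, Finset.sum_mul,
      Finset.sum_congr rfl hstep, ← Finset.mul_sum, hsum, Nat.factorial_succ]
    push_cast
    ring

theorem dimY_removeBox_div_dimY (hlam : isPartition lam) (hN : AtMostRows N lam) {r : Fin N}
    (hr : r ∈ corners N lam) :
    (dimY (removeBox lam r) : ℝ) / dimY lam = removalWeight (betaNumbers N lam) r / psize lam := by
  have hpos := pos_of_mem_corners hr
  have hsize := psize_removeBox hN.hasFiniteSupport hpos
  have hempty : frobeniusQuotient N (fun _ => 0) ≠ 0 :=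
    frobeniusQuotient_ne_zero ⟨fun _ _ _ => le_rfl, 0, fun _ _ => rfl⟩ N
  have hquot := frobeniusQuotient_ne_zero hlam N
  rw [← mul_div_mul_right _ _ hempty, dimY_mul_frobeniusQuotient_zero hlam hN,
    dimY_mul_frobeniusQuotient_zero (hlam.removeBox (mem_corners.1 hr)) (hN.removeBox r),
    frobeniusQuotient_removeBox hlam hpos, ← hsize, Nat.factorial_succ]
  have hfact : ((psize (removeBox lam r)).factorial : ℝ) ≠ 0 :=
    Nat.cast_ne_zero.2 (Nat.factorial_ne_zero _)
  push_cast
  field_simp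

end FrobeniusFormula

section Projection

variable {N : ℕ} {lam mu : ℕ → ℕ}

open Classical in
/-- The unit atom at `lam`. -/
noncomputable def pointMass (lam : ℕ → ℕ) : (ℕ → ℕ) → ℝ := fun f => if f = lam then 1 else 0

open Classical in
theorem projStep_pointMass (lam mu : ℕ → ℕ) :
    projStep (pointMass lam) mu = if addBox mu lam then (dimY mu : ℝ) / dimY lam else 0 := by
  rw [projStep, finsum_eq_single _ lam fun f hf => by simp [pointMass, hf]]
  split_ifs with h <;> simp [pointMass, h]

theorem support_projStep_pointMass_subset (hlam : isPartition lam) (hN : AtMostRows N lam) :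
    Function.support (projStep (pointMass lam)) ⊆
      (fun r : Fin N => removeBox lam r) '' corners N lam := by
  classical
  intro mu hmu
  rw [Function.mem_support, projStep_pointMass] at hmu
  obtain ⟨hadd, hdim⟩ := ite_ne_right_iff.1 hmu
  have hpart : isPartition mu := by
    contrapose! hdim
    rw [dimY_eq_zero_of_not_isPartition hdim, Nat.cast_zero, zero_div]
  exact (isPartition_and_addBox_iff hlam hN).1 ⟨hpart, hadd⟩

theorem projStep_pointMass_removeBox (hlam : isPartition lam) (hN : AtMostRows N lam) {r : Fin N}
    (hr : r ∈ corners N lam) : projStep (pointMass lam) (removeBox lam r) =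
      removalWeight (betaNumbers N lam) r / psize lam := by
  have hadd := ((isPartition_and_addBox_iff hlam hN).2 ⟨r, hr, rfl⟩).2
  rw [projStep_pointMass, if_pos hadd, dimY_removeBox_div_dimY hlam hN hr]

open Classical in
theorem finsum_mem_projStep_pointMass (hlam : isPartition lam) (hN : AtMostRows N lam)
    (U : Set (ℕ → ℕ)) : ∑ᶠ f ∈ U, projStep (pointMass lam) f =
      (∑ r : Fin N with r ∈ corners N lam ∧ removeBox lam r ∈ U,
        removalWeight (betaNumbers N lam) r) / psize lam := by
  rw [finsum_mem_eq_sum_of_subset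
      (t := ({r | r ∈ corners N lam ∧ removeBox lam r ∈ U} : Finset (Fin N)).image
        fun r : Fin N => removeBox lam r),
    Finset.sum_image ((removeBox_injOn_corners N lam).mono fun r hr =>
      (Finset.mem_filter.1 hr).2.1), Finset.sum_div]
  · exact Finset.sum_congr rfl fun r hr =>
      projStep_pointMass_removeBox hlam hN (Finset.mem_filter.1 hr).2.1
  · rintro f ⟨hfU, hf⟩
    obtain ⟨r, hr, rfl⟩ := support_projStep_pointMass_subset hlam hN hf
    exact Finset.mem_coe.2 (Finset.mem_image_of_mem _ ((Finset.mem_filter_univ r).2 ⟨hr, hfU⟩))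
  · intro f hf
    obtain ⟨r, hr, rfl⟩ := Finset.mem_image.1 (Finset.mem_coe.1 hf)
    exact (Finset.mem_filter.1 hr).2.2

end Projection

section DominanceOrder

theorem stochDom.refl (m : ℕ) (rho : (ℕ → ℕ) → ℝ) : stochDom m rho rho := fun _ _ => le_rfl

theorem stochDom.trans {m : ℕ} {rho₁ rho₂ rho₃ : (ℕ → ℕ) → ℝ} (h₁₂ : stochDom m rho₁ rho₂)
    (h₂₃ : stochDom m rho₂ rho₃) : stochDom m rho₁ rho₃ :=
  fun U hU => (h₂₃ U hU).trans (h₁₂ U hU)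

/-- The partition `lam` of `n` arises from the partition `mu` of `n` by moving one box to a higher
row. The move is recorded as an equation without subtraction. -/
structure BoxRaise (n : ℕ) (mu lam : ℕ → ℕ) : Prop where
  isPartition_left : isPartition mu
  isPartition_right : isPartition lam
  psize_left : psize mu = n
  psize_right : psize lam = n
  exists_add_single_eq : ∃ i j, i < j ∧ lam + Pi.single j 1 = mu + Pi.single i 1

variable {n : ℕ} {lam mu : ℕ → ℕ}

theorem BoxRaise.stochDom_projStep (h : BoxRaise n mu lam) :
    stochDom (n - 1) (projStep (pointMass lam)) (projStep (pointMass mu)) := by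
  classical
  obtain ⟨hmu, hlam, hsmu, hslam, i, j, hij, hmove⟩ := h
  obtain ⟨N, hmuN, hlamN, hjN⟩ : ∃ N, AtMostRows N mu ∧ AtMostRows N lam ∧ j < N := by
    obtain ⟨K, hK⟩ := hmu.2
    obtain ⟨L, hL⟩ := hlam.2
    exact ⟨max (max K L) (j + 1), fun a ha => hK a (by omega), fun a ha => hL a (by omega),
      by omega⟩
  lift i to Fin N using hij.trans hjN
  lift j to Fin N using hjN
  have hbeta : betaNumbers N lam + Pi.single j 1 = betaNumbers N mu + Pi.single i 1 := by
    rw [← betaNumbers_add_single, ← betaNumbers_add_single, hmove]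
  have hlamAnti := hlam.strictAnti_betaNumbers N
  have hmuAnti := hmu.strictAnti_betaNumbers N
  intro U hU
  rw [finsum_mem_projStep_pointMass hlam hlamN, finsum_mem_projStep_pointMass hmu hmuN, hslam,
    hsmu]
  refine div_le_div_of_nonneg_right (sum_le_sum_of_crossing
    (removalWeight_nonneg _) (removalWeight_nonneg _) ?_
    (fun r hr => removalWeight_le_of_lt hmuAnti hlamAnti hij hbeta hr)
    (fun r hr => removalWeight_le_of_gt hmuAnti hlamAnti hij hbeta hr) ?_) n.cast_nonneg
  · rw [sum_removalWeight_betaNumbers hlam hlamN, sum_removalWeight_betaNumbers hmu hmuN, hslam,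
      hsmu]
  · intro s hs r hr hsr
    obtain ⟨hs, hsU⟩ := (Finset.mem_filter_univ s).1 hs
    have hr : r ∈ corners N lam := not_not.1 (mt (removalWeight_betaNumbers_eq_zero hlam hlamN) hr)
    have hrpos := pos_of_mem_corners hr
    have hsize := psize_removeBox hlamN.hasFiniteSupport hrpos
    have hdom : dominates (removeBox lam r) (removeBox mu s) :=
      dominates_removeBox_of_add_single_eq hij hmove hrpos (pos_of_mem_corners hs) hsr
    exact (Finset.mem_filter_univ r).2
      ⟨hr, hU _ hsU _ (hlam.removeBox (mem_corners.1 hr)) (by omega) hdom⟩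

theorem isPartition.eventually_sum_range_eq (hlam : isPartition lam) :
    ∀ᶠ k in Filter.atTop, ∑ a ∈ Finset.range k, lam a = psize lam := by
  obtain ⟨N, hN⟩ := hlam.2
  filter_upwards [Filter.eventually_ge_atTop N] with k hk
  exact (AtMostRows.psize_eq_sum fun a ha => hN a (hk.trans ha)).symm

theorem exists_gt_sum_range_le (hlam : isPartition lam) (hmu : isPartition mu)
    (hsize : psize lam ≤ psize mu) (i : ℕ) :
    ∃ j, i < j ∧ ∑ a ∈ Finset.range (j + 1), lam a ≤ ∑ a ∈ Finset.range (j + 1), mu a := by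
  obtain ⟨k, hk, hklam, hkmu⟩ := ((Filter.eventually_gt_atTop (i + 1)).and
    (hlam.eventually_sum_range_eq.and hmu.eventually_sum_range_eq)).exists
  obtain ⟨j, rfl⟩ := Nat.exists_eq_succ_of_ne_zero (Nat.ne_zero_of_lt hk)
  exact ⟨j, Nat.lt_of_succ_lt_succ hk, hklam.trans_le (hsize.trans_eq hkmu.symm)⟩

/- Take for `i` the first row in which the partitions differ and for `j` the first later row through
which the partial sums agree again. -/
theorem exists_lt_rows_of_dominates (hlam : isPartition lam) (hmu : isPartition mu)
    (hsize : psize lam ≤ psize mu) (hdom : dominates lam mu) (hne : mu ≠ lam) :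
    ∃ i j, i < j ∧ (∀ a, a + 1 = i → mu i < mu a) ∧ mu (j + 1) < mu j ∧
      ∀ k, i < k → k ≤ j → ∑ a ∈ Finset.range k, mu a < ∑ a ∈ Finset.range k, lam a := by
  classical
  have hdiff : ∃ i, mu i ≠ lam i := Function.ne_iff.1 hne
  obtain ⟨i, hi, hbefore⟩ : ∃ i, mu i ≠ lam i ∧ ∀ a < i, mu a = lam a :=
    ⟨Nat.find hdiff, Nat.find_spec hdiff, fun a ha => not_not.1 (Nat.find_min hdiff ha)⟩
  have hsum : ∑ a ∈ Finset.range i, mu a = ∑ a ∈ Finset.range i, lam a :=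
    Finset.sum_congr rfl fun a ha => hbefore a (Finset.mem_range.1 ha)
  have hlt : mu i < lam i := by
    have := hdom (i + 1)
    rw [Finset.sum_range_succ, Finset.sum_range_succ] at this
    omega
  have hagain := exists_gt_sum_range_le hlam hmu hsize i
  obtain ⟨j, ⟨hij, hj⟩, hmin⟩ : ∃ j, (i < j ∧
      ∑ a ∈ Finset.range (j + 1), lam a ≤ ∑ a ∈ Finset.range (j + 1), mu a) ∧ ∀ m < j, ¬ (i < m ∧
      ∑ a ∈ Finset.range (m + 1), lam a ≤ ∑ a ∈ Finset.range (m + 1), mu a) :=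
    ⟨Nat.find hagain, Nat.find_spec hagain, fun m => Nat.find_min hagain⟩
  have hstrict (k : ℕ) (hik : i < k) (hkj : k ≤ j) :
      ∑ a ∈ Finset.range k, mu a < ∑ a ∈ Finset.range k, lam a := by
    obtain ⟨m, rfl⟩ := Nat.exists_eq_succ_of_ne_zero (Nat.ne_zero_of_lt hik)
    rcases (Nat.le_of_lt_succ hik).eq_or_lt with rfl | him
    · simpa only [Nat.succ_eq_add_one, Finset.sum_range_succ, hsum] using Nat.add_lt_add_left hlt _
    · exact not_le.1 fun hle => hmin m hkj ⟨him, hle⟩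
  refine ⟨i, j, hij, fun a ha => ?_, ?_, hstrict⟩
  · rw [hbefore a (by omega)]
    exact hlt.trans_le (hlam.1 (by omega))
  · have hbelow := hstrict j hij le_rfl
    have hafter := hdom (j + 2)
    have hanti : lam (j + 1) ≤ lam j := hlam.1 j.le_succ
    simp only [Finset.sum_range_succ] at hj hafter
    omega

theorem exists_boxRaise_dominates (hlam : isPartition lam) (hmu : isPartition mu)
    (hslam : psize lam = n) (hsmu : psize mu = n) (hdom : dominates lam mu) (hne : mu ≠ lam) :
    ∃ nu, BoxRaise n mu nu ∧ dominates lam nu := by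
  obtain ⟨i, j, hij, hi, hj, hlt⟩ :=
    exists_lt_rows_of_dominates hlam hmu (hslam.trans hsmu.symm).le hdom hne
  have hadd : isPartition (mu + Pi.single i 1) := hmu.add_single hi
  have hsucc : (mu + Pi.single i 1 : ℕ → ℕ) (j + 1) < (mu + Pi.single i 1 : ℕ → ℕ) j := by
    simpa [hij.ne', (hij.trans j.lt_succ_self).ne'] using hj
  have hmove : removeBox (mu + Pi.single i 1) j + Pi.single j 1 = mu + Pi.single i 1 :=
    removeBox_add_single (pos_of_gt hsucc)
  have hsize : psize (removeBox (mu + Pi.single i 1) j) = n := by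
    have := psize_removeBox hadd.hasFiniteSupport (pos_of_gt hsucc)
    rw [psize_add_single hmu.hasFiniteSupport] at this
    omega
  refine ⟨_, ⟨hmu, hadd.removeBox hsucc, hsmu, hsize, i, j, hij, hmove⟩, fun k => ?_⟩
  have hdomk := hdom k
  have hltk := hlt k
  replace hmove := congrArg (fun f : ℕ → ℕ => ∑ a ∈ Finset.range k, f a) hmove
  simp only [sum_range_add_single] at hmove
  split_ifs at hmove <;> omega

theorem BoxRaise.finsum_mul_lt (h : BoxRaise n mu lam) : ∑ᶠ a, a * lam a < ∑ᶠ a, a * mu a := by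
  obtain ⟨i, j, hij, hmove⟩ := h.exists_add_single_eq
  have := congrArg (fun f : ℕ → ℕ => ∑ᶠ a, a * f a) hmove
  simp only [finsum_mul_add_single (fun a => a) h.isPartition_left.hasFiniteSupport,
    finsum_mul_add_single (fun a => a) h.isPartition_right.hasFiniteSupport] at this
  omega

theorem reflTransGen_boxRaise_of_dominates (hlam : isPartition lam) (hmu : isPartition mu)
    (hslam : psize lam = n) (hsmu : psize mu = n) (hdom : dominates lam mu) :
    Relation.ReflTransGen (BoxRaise n) mu lam := by
  induction hweight : ∑ᶠ a, a * mu a using Nat.strong_induction_on generalizing mu with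
  | _ w ih =>
    rcases eq_or_ne mu lam with rfl | hne
    · exact .refl
    obtain ⟨nu, hraise, hdom'⟩ := exists_boxRaise_dominates hlam hmu hslam hsmu hdom hne
    exact .head hraise (ih _ (hweight ▸ hraise.finsum_mul_lt) hraise.isPartition_right
      hraise.psize_right hdom' rfl)

theorem stochDom_projStep_of_reflTransGen (h : Relation.ReflTransGen (BoxRaise n) mu lam) :
    stochDom (n - 1) (projStep (pointMass lam)) (projStep (pointMass mu)) := by
  induction h with
  | refl => exact stochDom.refl _ _
  | tail _ hraise ih => exact hraise.stochDom_projStep.trans ih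

end DominanceOrder

open Classical in
theorem projection_of_atoms_monotone (n : ℕ) (hn : 1 ≤ n)
    (lam hatlam : ℕ → ℕ)
    (hlam : isPartition lam) (hhatlam : isPartition hatlam)
    (hslam : psize lam = n) (hshatlam : psize hatlam = n)
    (hdom : dominates lam hatlam) :
    stochDom (n - 1)
      (projStep (fun f => if f = lam then 1 else 0))
      (projStep (fun f => if f = hatlam then 1 else 0)) := by
  have hchain : Relation.ReflTransGen (BoxRaise n) hatlam lam :=
    reflTransGen_boxRaise_of_dominates hlam hhatlam hslam hshatlam hdom
  exact stochDom_projStep_of_reflTransGen hchain
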